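/- Let Σ = {a,b,c} and let A be the architecture with Procs = {p1,p2}, Stacks = Bags = ∅, DS = Queues = {c1,c2}, Writer(c1) = Reader(c2) = p1 and Writer(c2) = Reader(c1) = p2. Then: (i) there exists a sentence Φ of IPDL(A,Σ) (PDL with intersection of path formulas, but without converse and loop) such that L(S) ≠ L_cbm(Φ) for every CPDS S over (A,Σ); and (ii) there exists a sentence Φ' of LCPDL(A,Σ) (PDL with converse and the loop predicate, but without intersection) such that L(S) ≠ L_cbm(Φ') for every CPDS S over (A,Σ). -/

import Mathlib

/-! ### Architectures and concurrent behaviors with matching (CBMs) -/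

/-- The three kinds of data structures. -/
inductive DSKind : Type
  | stack
  | queue
  | bag
deriving DecidableEq

/-- An architecture: a finite set of processes, a finite set of data structures
(each a stack, queue, or bag), with writer and reader processes; stacks are
written and read by the same process. -/
structure Architecture where
  Procs : Type
  DS : Type
  procsFintype : Fintype Procs
  dsFintype : Fintype DS
  procsDecEq : DecidableEq Procs
  dsDecEq : DecidableEq DS
  kind : DS → DSKind
  Writer : DS → Procs
  Reader : DS → Procs
  stack_wr : ∀ d, kind d = DSKind.stack → Writer d = Reader d

attribute [instance] Architecture.procsFintype Architecture.dsFintype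
  Architecture.procsDecEq Architecture.dsDecEq

/-- Potential events: a process together with a (1-based) position. -/
abbrev Architecture.Event (A : Architecture) : Type := A.Procs × ℕ

/-- The data of a CBM: one word per process and one matching relation per
data structure (on potential events). -/
structure PreCBM (A : Architecture) (Alph : Type) where
  word : A.Procs → List Alph
  mrel : A.DS → A.Event → A.Event → Prop

namespace PreCBM

variable {A : Architecture} {Alph : Type}

/-- `(p,i)` is an event iff `1 ≤ i ≤ |w_p|`. -/
def isEvent (M : PreCBM A Alph) (e : A.Event) : Prop :=
  1 ≤ e.2 ∧ e.2 ≤ (M.word e.1).length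

/-- The set of events of `M`. -/
def events (M : PreCBM A Alph) : Set A.Event := {e | M.isEvent e}

/-- The label of event `(p,i)` is the `i`-th letter of `w_p`. -/
def label (M : PreCBM A Alph) (e : A.Event) : Option Alph :=
  (M.word e.1)[e.2 - 1]?

/-- Process-successor relation `(p,i) → (p,i+1)`. -/
def procSucc (M : PreCBM A Alph) (e f : A.Event) : Prop :=
  M.isEvent e ∧ M.isEvent f ∧ f.1 = e.1 ∧ f.2 = e.2 + 1

/-- `e ▷ f` for some data structure. -/
def mat (M : PreCBM A Alph) (e f : A.Event) : Prop := ∃ d, M.mrel d e f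

def step (M : PreCBM A Alph) (e f : A.Event) : Prop := M.procSucc e f ∨ M.mat e f

/-- The causal order `< = (→ ∪ ▷)⁺`. -/
def lt (M : PreCBM A Alph) : A.Event → A.Event → Prop := Relation.TransGen M.step

/-- An event is internal if it is not the endpoint of any matching edge. -/
def isInternal (M : PreCBM A Alph) (e : A.Event) : Prop :=
  ¬ ∃ d f, M.mrel d e f ∨ M.mrel d f e

/-- The CBM axioms. -/
structure IsCBM (M : PreCBM A Alph) : Prop where
  mrel_valid : ∀ d e f, M.mrel d e f →
    M.isEvent e ∧ M.isEvent f ∧ e.1 = A.Writer d ∧ f.1 = A.Reader d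
  disjoint : ∀ d d' e f e' f', M.mrel d e f → M.mrel d' e' f' →
    ¬ (d = d' ∧ e = e' ∧ f = f') → e ≠ e' ∧ e ≠ f' ∧ f ≠ e' ∧ f ≠ f'
  irrefl : ∀ e, ¬ M.lt e e
  lifo : ∀ d, A.kind d = DSKind.stack → ∀ e₁ f₁ e₂ f₂,
    M.mrel d e₁ f₁ → M.mrel d e₂ f₂ → M.lt e₁ e₂ → M.lt e₂ f₁ → M.lt f₂ f₁
  fifo : ∀ d, A.kind d = DSKind.queue → ∀ e₁ f₁ e₂ f₂,
    M.mrel d e₁ f₁ → M.mrel d e₂ f₂ → M.lt e₁ e₂ → M.lt f₁ f₂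

end PreCBM

/-- Concurrent behaviors with matching over `(A, Alph)`. -/
def CBM (A : Architecture) (Alph : Type) : Type := {M : PreCBM A Alph // M.IsCBM}
/-! ### Systems of concurrent processes with data structures (CPDS) -/

/-- A CPDS over an architecture `A` and alphabet `Alph`. -/
structure CPDS (A : Architecture) (Alph : Type) where
  Locs : Type
  Val : Type
  locsFintype : Fintype Locs
  valFintype : Fintype Val
  locsNonempty : Nonempty Locs
  valNonempty : Nonempty Val
  internal : A.Procs → Locs → Alph → Locs → Prop
  write : A.Procs → Locs → Alph → A.DS → Val → Locs → Prop
  read : A.Procs → Locs → Alph → A.DS → Val → Locs → Prop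
  write_writer : ∀ p ℓ a d v ℓ', write p ℓ a d v ℓ' → A.Writer d = p
  read_reader : ∀ p ℓ a d v ℓ', read p ℓ a d v ℓ' → A.Reader d = p
  init : Locs
  finals : Set (A.Procs → Locs)

namespace CPDS

variable {A : Architecture} {Alph : Type}

/-- `ρ⁻(e)`: location before event `e` (`init` if `e` is minimal on its process). -/
def prevLoc (S : CPDS A Alph) (ρ : A.Event → S.Locs) (e : A.Event) : S.Locs :=
  if e.2 ≤ 1 then S.init else ρ (e.1, e.2 - 1)

/-- `ρ` is a run of `S` on `M` (graph semantics). -/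
def IsRun (S : CPDS A Alph) (M : PreCBM A Alph) (ρ : A.Event → S.Locs) : Prop :=
  (∀ e, M.isEvent e → M.isInternal e →
    ∃ a, M.label e = some a ∧ S.internal e.1 (S.prevLoc ρ e) a (ρ e)) ∧
  (∀ d e f, M.mrel d e f → ∃ v a b,
    M.label e = some a ∧ M.label f = some b ∧
    S.write e.1 (S.prevLoc ρ e) a d v (ρ e) ∧
    S.read f.1 (S.prevLoc ρ f) b d v (ρ f))

/-- Location of the last event of process `p` (`init` if it has no event). -/
def lastLoc (S : CPDS A Alph) (M : PreCBM A Alph) (ρ : A.Event → S.Locs)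
    (p : A.Procs) : S.Locs :=
  if (M.word p).length = 0 then S.init else ρ (p, (M.word p).length)

/-- `S` accepts `M`: some run reaching a global final location tuple. -/
def AcceptsPre (S : CPDS A Alph) (M : PreCBM A Alph) : Prop :=
  ∃ ρ : A.Event → S.Locs, S.IsRun M ρ ∧ (fun p => S.lastLoc M ρ p) ∈ S.finals

/-- The graph-semantics language `L(S) ⊆ CBM(A,Alph)`. -/
def lang (S : CPDS A Alph) : Set (CBM A Alph) := {M | S.AcceptsPre M.1}

end CPDS
/-! ### The two-process, two-queue architecture -/

/-- The architecture with processes `p1 = false`, `p2 = true`, queues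
`c1 = false` (from `p1` to `p2`) and `c2 = true` (from `p2` to `p1`). -/
def archQQ : Architecture where
  Procs := Bool
  DS := Bool
  procsFintype := inferInstance
  dsFintype := inferInstance
  procsDecEq := inferInstance
  dsDecEq := inferInstance
  kind := fun _ => DSKind.queue
  Writer := fun d => d
  Reader := fun d => !d
  stack_wr := fun _ h => DSKind.noConfusion h
/-! ### (IC)PDL over CBMs -/

mutual
  /-- State formulas of ICPDL over CBMs. -/
  inductive PdlS (A : Architecture) (Alph : Type) : Type
    | proc (p : A.Procs)
    | letter (a : Alph)
    | or (σ₁ σ₂ : PdlS A Alph)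
    | not (σ : PdlS A Alph)
    | diam (π : PdlP A Alph) (σ : PdlS A Alph)
    | loop (π : PdlP A Alph)
  /-- Path formulas of ICPDL over CBMs. -/
  inductive PdlP (A : Architecture) (Alph : Type) : Type
    | succ
    | mat (d : A.DS)
    | test (σ : PdlS A Alph)
    | plus (π₁ π₂ : PdlP A Alph)
    | comp (π₁ π₂ : PdlP A Alph)
    | star (π : PdlP A Alph)
    | conv (π : PdlP A Alph)
    | inter (π₁ π₂ : PdlP A Alph)
end

/-- Sentences of ICPDL. -/
inductive PdlSentence (A : Architecture) (Alph : Type) : Type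
  | ex (σ : PdlS A Alph)
  | or (Φ₁ Φ₂ : PdlSentence A Alph)
  | not (Φ : PdlSentence A Alph)

section PdlSem

variable {A : Architecture} {Alph : Type}

mutual
  /-- Semantics of state formulas over a CBM. -/
  def pdlSSem (M : PreCBM A Alph) : PdlS A Alph → A.Event → Prop
    | .proc p => fun e => M.isEvent e ∧ e.1 = p
    | .letter a => fun e => M.isEvent e ∧ M.label e = some a
    | .or σ₁ σ₂ => fun e => pdlSSem M σ₁ e ∨ pdlSSem M σ₂ e
    | .not σ => fun e => M.isEvent e ∧ ¬ pdlSSem M σ e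
    | .diam π σ => fun e => ∃ f, pdlPSem M π e f ∧ pdlSSem M σ f
    | .loop π => fun e => pdlPSem M π e e
  /-- Semantics of path formulas over a CBM. -/
  def pdlPSem (M : PreCBM A Alph) : PdlP A Alph → A.Event → A.Event → Prop
    | .succ => fun e f => M.procSucc e f
    | .mat d => fun e f => M.mrel d e f
    | .test σ => fun e f => e = f ∧ pdlSSem M σ e
    | .plus π₁ π₂ => fun e f => pdlPSem M π₁ e f ∨ pdlPSem M π₂ e f
    | .comp π₁ π₂ => fun e f => ∃ g, pdlPSem M π₁ e g ∧ pdlPSem M π₂ g f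
    | .star π => fun e f =>
        (M.isEvent e ∧ e = f) ∨ Relation.TransGen (fun u v => pdlPSem M π u v) e f
    | .conv π => fun e f => pdlPSem M π f e
    | .inter π₁ π₂ => fun e f => pdlPSem M π₁ e f ∧ pdlPSem M π₂ e f
end

/-- Semantics of sentences over a CBM. -/
def pdlSentSem (M : PreCBM A Alph) : PdlSentence A Alph → Prop
  | .ex σ => ∃ e, M.isEvent e ∧ pdlSSem M σ e
  | .or Φ₁ Φ₂ => pdlSentSem M Φ₁ ∨ pdlSentSem M Φ₂
  | .not Φ => ¬ pdlSentSem M Φ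

end PdlSem

/-- `L_cbm(Φ)`: the CBMs satisfying `Φ`. -/
def pdlLang (A : Architecture) (Alph : Type) (Φ : PdlSentence A Alph) :
    Set (CBM A Alph) := {M | pdlSentSem M.1 Φ}

section PdlFrag

variable {A : Architecture} {Alph : Type}

mutual
  /-- No intersection of path formulas (LCPDL and below). -/
  def PdlS.NoInter : PdlS A Alph → Prop
    | .proc _ => True
    | .letter _ => True
    | .or σ₁ σ₂ => σ₁.NoInter ∧ σ₂.NoInter
    | .not σ => σ.NoInter
    | .diam π σ => π.NoInter ∧ σ.NoInter
    | .loop π => π.NoInter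
  def PdlP.NoInter : PdlP A Alph → Prop
    | .succ => True
    | .mat _ => True
    | .test σ => σ.NoInter
    | .plus π₁ π₂ => π₁.NoInter ∧ π₂.NoInter
    | .comp π₁ π₂ => π₁.NoInter ∧ π₂.NoInter
    | .star π => π.NoInter
    | .conv π => π.NoInter
    | .inter _ _ => False
end

mutual
  /-- No converse and no loop (IPDL and below). -/
  def PdlS.NoConvLoop : PdlS A Alph → Prop
    | .proc _ => True
    | .letter _ => True
    | .or σ₁ σ₂ => σ₁.NoConvLoop ∧ σ₂.NoConvLoop
    | .not σ => σ.NoConvLoop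
    | .diam π σ => π.NoConvLoop ∧ σ.NoConvLoop
    | .loop _ => False
  def PdlP.NoConvLoop : PdlP A Alph → Prop
    | .succ => True
    | .mat _ => True
    | .test σ => σ.NoConvLoop
    | .plus π₁ π₂ => π₁.NoConvLoop ∧ π₂.NoConvLoop
    | .comp π₁ π₂ => π₁.NoConvLoop ∧ π₂.NoConvLoop
    | .star π => π.NoConvLoop
    | .conv _ => False
    | .inter π₁ π₂ => π₁.NoConvLoop ∧ π₂.NoConvLoop
end

def PdlSentence.NoInter : PdlSentence A Alph → Prop
  | .ex σ => σ.NoInter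
  | .or Φ₁ Φ₂ => Φ₁.NoInter ∧ Φ₂.NoInter
  | .not Φ => Φ.NoInter

def PdlSentence.NoConvLoop : PdlSentence A Alph → Prop
  | .ex σ => σ.NoConvLoop
  | .or Φ₁ Φ₂ => Φ₁.NoConvLoop ∧ Φ₂.NoConvLoop
  | .not Φ => Φ.NoConvLoop

end PdlFrag

/-!
Let both processes carry the same word, and let every even position `s` send a message which the
other process receives at position `s + 2n - 1`. A message to the other process and an answer back
then lead from `s` to `s + 4n`, and two more process steps lead to `s + 4n + 2`. Since
`lcm (4n) (4n + 2) = 4n(2n + 1)`, intersecting the iterations of these two paths, or closing a loop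
with one and the converse of the other, compares letters at distance `4n(2n + 1)`. A sentence can
thus require a word of length `8n(2n + 1)` to repeat its first half at all even positions.

A CPDS with `n` locations cannot check this. A message crossing the middle of the word is sent less
than `2n` positions before it, so a run transfers to the second half no more than the locations it
visits in a window of `2n` positions on either process. There are at most `n ^ (4n)` patterns of
such locations, but `2 ^ (4n²)` first halves, so the runs on two different squares agree on the
window and can be spliced into a run on a word that is not a square.
-/

/-! ### Splicing runs -/

section Splice

variable {A : Architecture} {Alph : Type}

namespace PreCBM

theorem isEvent_iff_isSome_label (M : PreCBM A Alph) (e : A.Event) :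
    M.isEvent e ↔ 1 ≤ e.2 ∧ (M.label e).isSome := by
  simp only [isEvent, label, isSome_getElem?]
  omega

/-- `M` consists of a prefix of `M₁` and a suffix of `M₂` overlapping in the window of positions
`[lo p, hi p]` on every process `p`, and no matching edge jumps over the window. Position `lo p`
counts as part of the prefix only, since the transition of an event also involves the location at
the preceding position. -/
structure IsSplice (M M₁ M₂ : PreCBM A Alph) (lo hi : A.Procs → ℕ) : Prop where
  mrel_left : M.mrel = M₁.mrel
  mrel_right : M.mrel = M₂.mrel
  label_left : ∀ e, e.2 ≤ hi e.1 → M.label e = M₁.label e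
  label_right : ∀ e, lo e.1 < e.2 → M.label e = M₂.label e
  length_right : ∀ p, (M.word p).length = (M₂.word p).length
  lo_le_length : ∀ p, lo p ≤ (M.word p).length
  lo_le_hi : ∀ p, lo p ≤ hi p
  edge : ∀ d e f, M.mrel d e f →
    (e.2 ≤ hi e.1 ∧ f.2 ≤ hi f.1) ∨ (lo e.1 < e.2 ∧ lo f.1 < f.2)

end PreCBM

namespace CPDS

theorem prevLoc_congr {S : CPDS A Alph} {ρ ρ' : A.Event → S.Locs} {e : A.Event}
    (h : ρ (e.1, e.2 - 1) = ρ' (e.1, e.2 - 1)) : S.prevLoc ρ e = S.prevLoc ρ' e := by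
  simp only [prevLoc, h]

/-- The locations of `ρ₁` up to position `hi p` on every process `p`, and those of `ρ₂` after it. -/
def spliceLocs {Locs : Type} (hi : A.Procs → ℕ) (ρ₁ ρ₂ : A.Event → Locs) (e : A.Event) : Locs :=
  if e.2 ≤ hi e.1 then ρ₁ e else ρ₂ e

variable {S : CPDS A Alph} {M M₁ M₂ : PreCBM A Alph} {lo hi : A.Procs → ℕ}
  {ρ₁ ρ₂ : A.Event → S.Locs} {e : A.Event}

theorem spliceLocs_of_le (he : e.2 ≤ hi e.1) : spliceLocs hi ρ₁ ρ₂ e = ρ₁ e := if_pos he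

theorem spliceLocs_of_ge (hagree : ∀ p, ∀ s ∈ Finset.Icc (lo p) (hi p), ρ₁ (p, s) = ρ₂ (p, s))
    (he : lo e.1 ≤ e.2) : spliceLocs hi ρ₁ ρ₂ e = ρ₂ e := by
  by_cases h : e.2 ≤ hi e.1
  · exact (spliceLocs_of_le h).trans (hagree e.1 e.2 (Finset.mem_Icc.2 ⟨he, h⟩))
  · exact if_neg h

theorem IsRun.splice (hM : M.IsSplice M₁ M₂ lo hi) (h₁ : S.IsRun M₁ ρ₁) (h₂ : S.IsRun M₂ ρ₂)
    (hagree : ∀ p, ∀ s ∈ Finset.Icc (lo p) (hi p), ρ₁ (p, s) = ρ₂ (p, s)) :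
    S.IsRun M (spliceLocs hi ρ₁ ρ₂) := by
  have prev_left {e : A.Event} (he : e.2 ≤ hi e.1) :
      S.prevLoc (spliceLocs hi ρ₁ ρ₂) e = S.prevLoc ρ₁ e :=
    prevLoc_congr (spliceLocs_of_le ((Nat.sub_le _ _).trans he))
  have prev_right {e : A.Event} (he : lo e.1 < e.2) :
      S.prevLoc (spliceLocs hi ρ₁ ρ₂) e = S.prevLoc ρ₂ e :=
    prevLoc_congr (spliceLocs_of_ge hagree (Nat.le_sub_one_of_lt he))
  refine ⟨fun e he hint => ?_, fun d e f hd => ?_⟩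
  · rw [M.isEvent_iff_isSome_label] at he
    rcases le_or_gt e.2 (hi e.1) with hle | hgt
    · rw [hM.label_left e hle] at he ⊢
      rw [PreCBM.isInternal, hM.mrel_left] at hint
      rw [prev_left hle, spliceLocs_of_le hle]
      exact h₁.1 e ((M₁.isEvent_iff_isSome_label e).2 he) hint
    · have hlo := (hM.lo_le_hi e.1).trans_lt hgt
      rw [hM.label_right e hlo] at he ⊢
      rw [PreCBM.isInternal, hM.mrel_right] at hint
      rw [prev_right hlo, spliceLocs_of_ge hagree hlo.le]
      exact h₂.1 e ((M₂.isEvent_iff_isSome_label e).2 he) hint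
  · rcases hM.edge d e f hd with ⟨he, hf⟩ | ⟨he, hf⟩
    · rw [hM.label_left e he, hM.label_left f hf, prev_left he, prev_left hf, spliceLocs_of_le he,
        spliceLocs_of_le hf]
      exact h₁.2 d e f (hM.mrel_left ▸ hd)
    · rw [hM.label_right e he, hM.label_right f hf, prev_right he, prev_right hf,
        spliceLocs_of_ge hagree he.le, spliceLocs_of_ge hagree hf.le]
      exact h₂.2 d e f (hM.mrel_right ▸ hd)

theorem acceptsPre_of_isSplice (hM : M.IsSplice M₁ M₂ lo hi)
    (h₁ : S.IsRun M₁ ρ₁) (h₂ : S.IsRun M₂ ρ₂)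
    (hfin : (fun p => S.lastLoc M₂ ρ₂ p) ∈ S.finals)
    (hagree : ∀ p, ∀ s ∈ Finset.Icc (lo p) (hi p), ρ₁ (p, s) = ρ₂ (p, s)) :
    S.AcceptsPre M := by
  have last (p : A.Procs) : S.lastLoc M (spliceLocs hi ρ₁ ρ₂) p = S.lastLoc M₂ ρ₂ p := by
    simp only [lastLoc, ← hM.length_right,
      spliceLocs_of_ge (e := (p, _)) hagree (hM.lo_le_length p)]
  exact ⟨_, h₁.splice hM h₂ hagree, by simpa only [last] using hfin⟩

attribute [local instance] CPDS.locsFintype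

theorem exists_ne_acceptsPre_of_isSplice {ι : Type*} [Fintype ι] (S : CPDS A Alph)
    {N : ι → ι → PreCBM A Alph} (hN : ∀ x y, (N x y).IsSplice (N x x) (N y y) lo hi)
    (hacc : ∀ x, S.AcceptsPre (N x x))
    (hcard : Fintype.card S.Locs ^ (∑ p, (hi p + 1 - lo p)) < Fintype.card ι) :
    ∃ x y, x ≠ y ∧ S.AcceptsPre (N x y) ∧ S.AcceptsPre (N y x) := by
  classical
  choose ρ hrun hfin using hacc
  let pattern (x : ι) (q : (p : A.Procs) × Finset.Icc (lo p) (hi p)) : S.Locs := ρ x (q.1, q.2)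
  obtain ⟨x, y, hne, heq⟩ := Fintype.exists_ne_map_eq_of_card_lt pattern (by
    simpa only [Fintype.card_fun, Fintype.card_sigma, Fintype.card_coe, Nat.card_Icc] using hcard)
  have hagree (p : A.Procs) (s : ℕ) (hs : s ∈ Finset.Icc (lo p) (hi p)) :
      ρ x (p, s) = ρ y (p, s) := congrFun heq ⟨p, s, hs⟩
  exact ⟨x, y, hne,
    acceptsPre_of_isSplice (hN x y) (hrun x) (hrun y) (hfin y) hagree,
    acceptsPre_of_isSplice (hN y x) (hrun y) (hrun x) (hfin x) fun p s hs => (hagree p s hs).symm⟩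

end CPDS

end Splice

/-! ### Comparing the endpoints of two paths -/

section Joins

variable {A : Architecture} {Alph : Type}

/-- Some `a`-labelled event and some `b`-labelled event are connected both by a `π₁`-path and by a
`π₂`-path. IPDL expresses this by intersection, LCPDL by a loop running back along `π₂`. -/
def PreCBM.Joins (M : PreCBM A Alph) (π₁ π₂ : PdlP A Alph) (a b : Alph) : Prop :=
  ∃ e f, pdlSSem M (.letter a) e ∧ pdlPSem M π₁ e f ∧ pdlPSem M π₂ e f ∧ pdlSSem M (.letter b) f

namespace PdlSentence

/-- The IPDL sentence `¬ E ⟨test(a) · (π₁ ∩ π₂)⟩ b`. -/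
def notJoinsInter (π₁ π₂ : PdlP A Alph) (a b : Alph) : PdlSentence A Alph :=
  .not (.ex (.diam (.comp (.test (.letter a)) (.inter π₁ π₂)) (.letter b)))

/-- The LCPDL sentence `¬ E Loop⟨test(a) · π₁ · test(b) · π₂⁻¹⟩`. -/
def notJoinsLoop (π₁ π₂ : PdlP A Alph) (a b : Alph) : PdlSentence A Alph :=
  .not (.ex (.loop (.comp (.test (.letter a)) (.comp π₁ (.comp (.test (.letter b)) (.conv π₂))))))

variable {π₁ π₂ : PdlP A Alph}

theorem noConvLoop_notJoinsInter (h₁ : π₁.NoConvLoop) (h₂ : π₂.NoConvLoop) (a b : Alph) :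
    (notJoinsInter π₁ π₂ a b).NoConvLoop :=
  ⟨⟨trivial, h₁, h₂⟩, trivial⟩

theorem noInter_notJoinsLoop (h₁ : π₁.NoInter) (h₂ : π₂.NoInter) (a b : Alph) :
    (notJoinsLoop π₁ π₂ a b).NoInter :=
  ⟨trivial, h₁, trivial, h₂⟩

variable (M : PreCBM A Alph) (π₁ π₂) (a b : Alph)

theorem pdlSentSem_notJoinsInter :
    pdlSentSem M (notJoinsInter π₁ π₂ a b) ↔ ¬ M.Joins π₁ π₂ a b := by
  refine not_congr ⟨?_, ?_⟩
  · rintro ⟨e, -, f, ⟨_, ⟨rfl, ha⟩, h₁, h₂⟩, hb⟩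
    exact ⟨e, f, ha, h₁, h₂, hb⟩
  · rintro ⟨e, f, ha, h₁, h₂, hb⟩
    exact ⟨e, ha.1, f, ⟨e, ⟨rfl, ha⟩, h₁, h₂⟩, hb⟩

theorem pdlSentSem_notJoinsLoop :
    pdlSentSem M (notJoinsLoop π₁ π₂ a b) ↔ ¬ M.Joins π₁ π₂ a b := by
  refine not_congr ⟨?_, ?_⟩
  · rintro ⟨e, -, _, ⟨rfl, ha⟩, f, h₁, _, ⟨rfl, hb⟩, h₂⟩
    exact ⟨e, f, ha, h₁, h₂, hb⟩
  · rintro ⟨e, f, ha, h₁, h₂, hb⟩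
    exact ⟨e, ha.1, e, ⟨rfl, ha⟩, f, h₁, f, ⟨rfl, hb⟩, h₂⟩

end PdlSentence

end Joins

/-! ### Iterated paths -/

section Star

variable {A : Architecture} {Alph : Type} {M : PreCBM A Alph} {π : PdlP A Alph}

theorem pdlPSem_star_tail {e f g : A.Event} (hef : pdlPSem M (.star π) e f)
    (hfg : pdlPSem M π f g) : pdlPSem M (.star π) e g := by
  rcases hef with ⟨-, rfl⟩ | hef
  · exact Or.inr (.single hfg)
  · exact Or.inr (hef.tail hfg)

theorem pdlPSem_star_of_forall_lt {u : ℕ → A.Event} (hu : M.isEvent (u 0)) {k : ℕ}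
    (h : ∀ j < k, pdlPSem M π (u j) (u (j + 1))) : pdlPSem M (.star π) (u 0) (u k) := by
  induction k with
  | zero => exact Or.inl ⟨hu, rfl⟩
  | succ k ih => exact pdlPSem_star_tail (ih fun j hj => h j (by omega)) (h k k.lt_succ_self)

theorem exists_snd_eq_add_mul_of_pdlPSem_star {c : ℕ} (h : ∀ e f, pdlPSem M π e f → f.2 = e.2 + c)
    {e f : A.Event} (hef : pdlPSem M (.star π) e f) : ∃ k, f.2 = e.2 + c * k := by
  rcases hef with ⟨-, rfl⟩ | hef
  · exact ⟨0, rfl⟩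
  induction hef with
  | single hef => exact ⟨1, by rw [h _ _ hef, mul_one]⟩
  | tail _ hfg ih =>
    obtain ⟨k, hk⟩ := ih
    exact ⟨k + 1, by rw [h _ _ hfg, hk, mul_add_one, add_assoc]⟩

end Star

/-! ### Delayed message exchange -/

section Juxtapose

variable {Alph : Type}

/-- The first `N` letters of `u` followed by the letters of `v`; positions start at `1`. -/
def juxtapose (N : ℕ) (u v : ℕ → Alph) (s : ℕ) : Alph := if s ≤ N then u s else v (s - N)

variable {N s : ℕ}

theorem juxtapose_of_le (hs : s ≤ N) (u v : ℕ → Alph) : juxtapose N u v s = u s :=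
  if_pos hs

theorem juxtapose_add (hs : 1 ≤ s) (u v : ℕ → Alph) : juxtapose N u v (s + N) = v s := by
  rw [juxtapose, if_neg (by omega), Nat.add_sub_cancel]

theorem juxtapose_congr_left {u u' : ℕ → Alph} (h : s ≤ N → u s = u' s) (v : ℕ → Alph) :
    juxtapose N u v s = juxtapose N u' v s :=
  ite_congr rfl h fun _ => rfl

end Juxtapose

namespace PreCBM

section Exchange

variable {A : Architecture} {Alph : Type}

theorem lt_of_isEvent (M : PreCBM A Alph) {p : A.Procs} {i j : ℕ} (hi : 1 ≤ i) (hij : i < j)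
    (hj : M.isEvent (p, j)) : M.lt (p, i) (p, j) := by
  induction j, hij using Nat.le_induction with
  | base => exact .single (Or.inl ⟨⟨hi, i.le_succ.trans hj.2⟩, hj, rfl, rfl⟩)
  | succ j hij ih =>
    have hj' : M.isEvent (p, j) := ⟨hi.trans (i.le_succ.trans hij), j.le_succ.trans hj.2⟩
    exact (ih hj').tail (Or.inl ⟨hj', hj, rfl, rfl⟩)

/-- Every process carries the word `w 1 … w L`. Every even position of the writer of `d` sends a
message over `d`, which the reader of `d` receives `2 * n - 1` positions later; messages that would
arrive after position `L` are omitted. -/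
def exchange (A : Architecture) (n L : ℕ) (w : ℕ → Alph) : PreCBM A Alph where
  word _ := (List.range L).map fun s => w (s + 1)
  mrel d e f := ∃ i, e = (A.Writer d, 2 * i + 2) ∧ f = (A.Reader d, 2 * i + 2 * n + 1) ∧
    2 * i + 2 * n + 1 ≤ L

variable {n L : ℕ} {w : ℕ → Alph}

theorem isEvent_exchange {e : A.Event} : (exchange A n L w).isEvent e ↔ 1 ≤ e.2 ∧ e.2 ≤ L := by
  simp [isEvent, exchange]

theorem label_exchange {e : A.Event} (he : (exchange A n L w).isEvent e) :
    (exchange A n L w).label e = some (w e.2) := by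
  rw [isEvent_exchange] at he
  have hlt : e.2 - 1 < L := by omega
  simp [label, exchange, hlt, Nat.sub_add_cancel he.1]

theorem snd_lt_of_step_exchange (hn : 0 < n) {e f : A.Event}
    (h : (exchange A n L w).step e f) : e.2 < f.2 := by
  rcases h with ⟨-, -, -, hsucc⟩ | ⟨d, i, rfl, rfl, -⟩
  · omega
  · simp only
    omega

theorem snd_lt_of_lt_exchange (hn : 0 < n) {e f : A.Event} (h : (exchange A n L w).lt e f) :
    e.2 < f.2 := by
  induction h with
  | single h => exact snd_lt_of_step_exchange hn h
  | tail _ h ih => exact ih.trans (snd_lt_of_step_exchange hn h)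

theorem isCBM_exchange (hn : 0 < n) (hwriter : A.Writer.Injective) (hreader : A.Reader.Injective)
    (hkind : ∀ d, A.kind d ≠ .stack) : (exchange A n L w).IsCBM where
  mrel_valid := by
    rintro d e f ⟨i, rfl, rfl, hL⟩
    simp only [isEvent_exchange, and_true]
    omega
  disjoint := by
    rintro d d' e f e' f' ⟨i, rfl, rfl, -⟩ ⟨i', rfl, rfl, -⟩ hne
    refine ⟨fun h => hne ?_, fun h => ?_, fun h => ?_, fun h => hne ?_⟩ <;>
      obtain ⟨hproc, hpos⟩ := Prod.ext_iff.1 h <;> simp only at hproc hpos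
    · obtain rfl := hwriter hproc
      obtain rfl : i = i' := by omega
      exact ⟨rfl, rfl, rfl⟩
    · omega
    · omega
    · obtain rfl := hreader hproc
      obtain rfl : i = i' := by omega
      exact ⟨rfl, rfl, rfl⟩
  irrefl e h := (snd_lt_of_lt_exchange hn h).false
  lifo d h := absurd h (hkind d)
  fifo := by
    rintro d - e f e' f' ⟨i, rfl, rfl, -⟩ ⟨i', rfl, rfl, hL⟩ hlt
    have hii : 2 * i + 2 < 2 * i' + 2 := snd_lt_of_lt_exchange hn hlt
    exact lt_of_isEvent _ (by omega) (by omega) (isEvent_exchange.2 ⟨by omega, hL⟩)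

theorem pdlPSem_mat_comp_succ_exchange {d : A.DS} {e f : A.Event} :
    pdlPSem (exchange A n L w) (.comp (.mat d) .succ) e f ↔
      ∃ i, e = (A.Writer d, 2 * i + 2) ∧ f = (A.Reader d, 2 * i + 2 + 2 * n) ∧
        2 * i + 2 + 2 * n ≤ L := by
  constructor
  · rintro ⟨_, ⟨i, rfl, rfl, -⟩, -, hf, hproc, hpos⟩
    have hpos : f.2 = 2 * i + 2 + 2 * n := by rw [hpos]; ring
    exact ⟨i, rfl, Prod.ext hproc hpos, hpos ▸ (isEvent_exchange.1 hf).2⟩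
  · rintro ⟨i, rfl, rfl, hL⟩
    refine ⟨_, ⟨i, rfl, rfl, by omega⟩, ?_, ?_, rfl, by simp only; ring⟩ <;>
      rw [isEvent_exchange] <;> simp only <;> omega

theorem pdlPSem_star_exchange {π : PdlP A Alph} {p : A.Procs} {c : ℕ}
    (hπ : ∀ i, 2 * i + 2 + 2 * c ≤ L →
      pdlPSem (exchange A n L w) π (p, 2 * i + 2) (p, 2 * i + 2 + 2 * c))
    {i k : ℕ} (hL : 2 * i + 2 + 2 * c * k ≤ L) :
    pdlPSem (exchange A n L w) (.star π) (p, 2 * i + 2) (p, 2 * i + 2 + 2 * c * k) := by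
  refine pdlPSem_star_of_forall_lt (u := fun j => (p, 2 * i + 2 + 2 * c * j)) ?_ fun j hj => ?_
  · rw [isEvent_exchange]
    simp only
    omega
  · have hle : 2 * c * (j + 1) ≤ 2 * c * k := Nat.mul_le_mul_left _ hj
    convert hπ (i + c * j) (by linarith) using 2 <;> ring

-- `label` reads position `0` as position `1`, hence `e.2 - 1 + 1`.
theorem label_exchange_congr {w' : ℕ → Alph} {e : A.Event}
    (h : w (e.2 - 1 + 1) = w' (e.2 - 1 + 1)) :
    (exchange A n L w).label e = (exchange A n L w').label e := by
  by_cases hL : e.2 - 1 < L <;> simp [label, exchange, hL, h]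

theorem isSplice_exchange_juxtapose {N : ℕ} {u v : ℕ → Alph} (hn : 0 < n) (hN : 2 * n ≤ N)
    (huv : ∀ s ∈ Finset.Icc (N + 1 - 2 * n) N, u s = v s) :
    (exchange A n (2 * N) (juxtapose N u v)).IsSplice
      (exchange A n (2 * N) (juxtapose N u u)) (exchange A n (2 * N) (juxtapose N v v))
      (fun _ => N + 1 - 2 * n) (fun _ => N) where
  mrel_left := rfl
  mrel_right := rfl
  label_left e he := by
    have hpos : e.2 - 1 + 1 ≤ N := by omega
    exact label_exchange_congr (by rw [juxtapose_of_le hpos, juxtapose_of_le hpos])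
  label_right e he :=
    label_exchange_congr (juxtapose_congr_left
      (fun hle => huv _ (Finset.mem_Icc.2 ⟨by omega, hle⟩)) v)
  length_right _ := by simp only [exchange, List.length_map]
  lo_le_length _ := by
    simp only [exchange, List.length_map, List.length_range]
    omega
  lo_le_hi _ := by omega
  edge := by
    rintro d e f ⟨i, rfl, rfl, -⟩
    simp only
    omega

end Exchange

end PreCBM

/-! ### Round trips -/

namespace archQQ

theorem writer_injective : archQQ.Writer.Injective := fun _ _ h => h

theorem reader_injective : archQQ.Reader.Injective := fun _ _ h => Bool.not_inj h

theorem kind_ne_stack (d : archQQ.DS) : archQQ.kind d ≠ .stack := nofun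

/-- The process `p₁`. -/
abbrev p₁ : archQQ.Procs := (false : Bool)

/-- The queue `c₁` from `p₁` to `p₂`. -/
abbrev c₁ : archQQ.DS := (false : Bool)

/-- The queue `c₂` from `p₂` to `p₁`. -/
abbrev c₂ : archQQ.DS := (true : Bool)

end archQQ

section RoundTrip

open PreCBM archQQ

variable {Alph : Type}

/-- The path `▷^c₁ · → · ▷^c₂ · →`, which moves by `4 * n` on `exchange archQQ n L w`. -/
def roundTrip : PdlP archQQ Alph := .comp (.comp (.mat c₁) .succ) (.comp (.mat c₂) .succ)

/-- The path `▷^c₁ · → · ▷^c₂ · → · → · →`, which moves by `4 * n + 2` on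
`exchange archQQ n L w`. -/
def roundTripShift : PdlP archQQ Alph := .comp roundTrip (.comp .succ .succ)

theorem noConvLoop_roundTrip : (roundTrip : PdlP archQQ Alph).NoConvLoop :=
  ⟨⟨trivial, trivial⟩, trivial, trivial⟩

theorem noConvLoop_roundTripShift : (roundTripShift : PdlP archQQ Alph).NoConvLoop :=
  ⟨noConvLoop_roundTrip, trivial, trivial⟩

theorem noInter_roundTrip : (roundTrip : PdlP archQQ Alph).NoInter :=
  ⟨⟨trivial, trivial⟩, trivial, trivial⟩

theorem noInter_roundTripShift : (roundTripShift : PdlP archQQ Alph).NoInter :=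
  ⟨noInter_roundTrip, trivial, trivial⟩

section Semantics

variable {n L : ℕ} {w : ℕ → Alph} {e f : archQQ.Event}

theorem pdlPSem_roundTrip :
    pdlPSem (exchange archQQ n L w) roundTrip e f ↔
      ∃ i, e = (p₁, 2 * i + 2) ∧ f = (p₁, 2 * i + 2 + 4 * n) ∧ 2 * i + 2 + 4 * n ≤ L := by
  constructor
  · rintro ⟨g, hout, hback⟩
    obtain ⟨i, rfl, rfl, -⟩ := pdlPSem_mat_comp_succ_exchange.1 hout
    obtain ⟨j, hj, rfl, hL⟩ := pdlPSem_mat_comp_succ_exchange.1 hback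
    have hij : 2 * i + 2 + 2 * n = 2 * j + 2 := congrArg Prod.snd hj
    exact ⟨i, rfl, Prod.ext rfl (by simp only; omega), by omega⟩
  · rintro ⟨i, rfl, rfl, hL⟩
    exact ⟨(archQQ.Reader c₁, 2 * i + 2 + 2 * n),
      pdlPSem_mat_comp_succ_exchange.2 ⟨i, rfl, rfl, by omega⟩,
      pdlPSem_mat_comp_succ_exchange.2 ⟨i + n, Prod.ext rfl (by simp only; ring),
        Prod.ext rfl (by simp only; ring), by omega⟩⟩

theorem pdlPSem_roundTripShift :
    pdlPSem (exchange archQQ n L w) roundTripShift e f ↔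
      ∃ i, e = (p₁, 2 * i + 2) ∧ f = (p₁, 2 * i + 2 + (4 * n + 2)) ∧
        2 * i + 2 + (4 * n + 2) ≤ L := by
  constructor
  · rintro ⟨g, htrip, g', ⟨-, -, hproc', hpos'⟩, -, hf, hproc, hpos⟩
    obtain ⟨i, rfl, rfl, -⟩ := pdlPSem_roundTrip.1 htrip
    have hpos : f.2 = 2 * i + 2 + (4 * n + 2) := by
      rw [hpos, hpos']
      ring
    exact ⟨i, rfl, Prod.ext (hproc.trans hproc') hpos, hpos ▸ (isEvent_exchange.1 hf).2⟩
  · rintro ⟨i, rfl, rfl, hL⟩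
    have isEvent {s : ℕ} (h₁ : 1 ≤ s) (h₂ : s ≤ 2 * i + 2 + (4 * n + 2)) :
        (exchange archQQ n L w).isEvent (p₁, s) := isEvent_exchange.2 ⟨h₁, h₂.trans hL⟩
    exact ⟨_, pdlPSem_roundTrip.2 ⟨i, rfl, rfl, by omega⟩, (p₁, 2 * i + 2 + 4 * n + 1),
      ⟨isEvent (by omega) (by omega), isEvent (by omega) (by omega), rfl, rfl⟩,
      isEvent (by omega) (by omega), isEvent (by omega) (by omega), rfl, rfl⟩

end Semantics

/-- The least common multiple of the lengths `4 * n` of `roundTrip` and `4 * n + 2` of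
`roundTripShift`. -/
def period (n : ℕ) : ℕ := 4 * n * (2 * n + 1)

theorem period_eq_two_mul_add (n : ℕ) : period n = 2 * (4 * n ^ 2) + 4 * n := by
  rw [period]
  ring

theorem period_dvd {n k : ℕ} (h₁ : 4 * n ∣ k) (h₂ : 4 * n + 2 ∣ k) : period n ∣ k := by
  obtain ⟨i, rfl⟩ := h₁
  obtain ⟨j, hj⟩ := h₂
  have hdvd : 2 * n + 1 ∣ 2 * n * i := ⟨j, by linarith⟩
  have hcoprime : Nat.Coprime (2 * n + 1) (2 * n) := by simp
  exact mul_dvd_mul_left (4 * n) (hcoprime.dvd_of_dvd_mul_left hdvd)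

theorem eq_zero_or_eq_period {n k : ℕ} (h₁ : 4 * n ∣ k) (h₂ : 4 * n + 2 ∣ k)
    (hk : k < 2 * period n) : k = 0 ∨ k = period n := by
  obtain ⟨j, rfl⟩ := period_dvd h₁ h₂
  have hj : j < 2 := lt_of_mul_lt_mul_left (hk.trans_eq (mul_comm _ _)) (Nat.zero_le _)
  interval_cases j <;> simp

variable {n : ℕ} {a b : Alph}

theorem snd_eq_of_star_roundTrip {w : ℕ → Alph} {e f : archQQ.Event}
    (he : (exchange archQQ n (2 * period n) w).isEvent e)
    (hf : (exchange archQQ n (2 * period n) w).isEvent f)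
    (h₁ : pdlPSem (exchange archQQ n (2 * period n) w) (.star roundTrip) e f)
    (h₂ : pdlPSem (exchange archQQ n (2 * period n) w) (.star roundTripShift) e f) :
    f.2 = e.2 ∨ f.2 = e.2 + period n := by
  obtain ⟨i, hi⟩ := exists_snd_eq_add_mul_of_pdlPSem_star (c := 4 * n) (fun e f h => by
    obtain ⟨i, rfl, rfl, -⟩ := pdlPSem_roundTrip.1 h
    rfl) h₁
  obtain ⟨j, hj⟩ := exists_snd_eq_add_mul_of_pdlPSem_star (c := 4 * n + 2) (fun e f h => by
    obtain ⟨i, rfl, rfl, -⟩ := pdlPSem_roundTripShift.1 h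
    rfl) h₂
  rw [isEvent_exchange] at he hf
  have := eq_zero_or_eq_period (n := n) (k := f.2 - e.2) ⟨i, by omega⟩ ⟨j, by omega⟩ (by omega)
  omega

theorem not_joins_exchange_square (hab : a ≠ b) (u : ℕ → Alph) :
    ¬ (exchange archQQ n (2 * period n) (juxtapose (period n) u u)).Joins
      (.star roundTrip) (.star roundTripShift) a b := by
  rintro ⟨e, f, ⟨he, hea⟩, h₁, h₂, hf, hfb⟩
  rw [label_exchange he, Option.some_inj] at hea
  rw [label_exchange hf, Option.some_inj] at hfb
  apply hab
  rcases snd_eq_of_star_roundTrip he hf h₁ h₂ with hfe | hfe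
  · rw [← hea, ← hfb, hfe]
  · rw [isEvent_exchange] at he hf
    rw [hfe, juxtapose_add he.1] at hfb
    rw [juxtapose_of_le (by omega)] at hea
    rw [← hea, ← hfb]

theorem pdlPSem_star_roundTrip_period {L i : ℕ} {w : ℕ → Alph} (hL : 2 * i + 2 + period n ≤ L) :
    pdlPSem (exchange archQQ n L w) (.star roundTrip)
      (p₁, 2 * i + 2) (p₁, 2 * i + 2 + period n) := by
  have hperiod : period n = 2 * (2 * n) * (2 * n + 1) := by rw [period]; ring
  rw [hperiod] at hL ⊢
  exact pdlPSem_star_exchange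
    (fun j hj => pdlPSem_roundTrip.2 ⟨j, rfl, by congr 1; ring, by omega⟩) hL

theorem pdlPSem_star_roundTripShift_period {L i : ℕ} {w : ℕ → Alph}
    (hL : 2 * i + 2 + period n ≤ L) :
    pdlPSem (exchange archQQ n L w) (.star roundTripShift)
      (p₁, 2 * i + 2) (p₁, 2 * i + 2 + period n) := by
  have hperiod : period n = 2 * (2 * n + 1) * (2 * n) := by rw [period]; ring
  rw [hperiod] at hL ⊢
  exact pdlPSem_star_exchange
    (fun j hj => pdlPSem_roundTripShift.2 ⟨j, rfl, by congr 1; ring, by omega⟩) hL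

theorem joins_exchange_juxtapose {u v : ℕ → Alph} {i : ℕ} (hi : 2 * i + 2 ≤ period n)
    (hu : u (2 * i + 2) = a) (hv : v (2 * i + 2) = b) :
    (exchange archQQ n (2 * period n) (juxtapose (period n) u v)).Joins
      (.star roundTrip) (.star roundTripShift) a b := by
  have hL : 2 * i + 2 + period n ≤ 2 * period n := by omega
  refine ⟨(p₁, 2 * i + 2), (p₁, 2 * i + 2 + period n), ?_, pdlPSem_star_roundTrip_period hL,
    pdlPSem_star_roundTripShift_period hL, ?_⟩
  · have he : (exchange archQQ n (2 * period n) (juxtapose (period n) u v)).isEvent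
        (p₁, 2 * i + 2) := isEvent_exchange.2 ⟨by omega, by omega⟩
    exact ⟨he, by rw [label_exchange he, juxtapose_of_le hi, hu]⟩
  · have hf : (exchange archQQ n (2 * period n) (juxtapose (period n) u v)).isEvent
        (p₁, 2 * i + 2 + period n) := isEvent_exchange.2 ⟨by omega, hL⟩
    exact ⟨hf, by rw [label_exchange hf, juxtapose_add (by omega), hv]⟩

end RoundTrip

/-! ### Counting -/

section Counting

open PreCBM

variable {Alph : Type}

open Classical in
/-- The word with letter `a` at the positions `2 * i + 2`, `i ∈ X`, and `b` elsewhere. Only even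
positions carry information, as these are the positions which `roundTrip` can start from. -/
noncomputable def markWord (a b : Alph) (X : Finset ℕ) (s : ℕ) : Alph :=
  if ∃ i ∈ X, 2 * i + 2 = s then a else b

variable {a b : Alph} {n i : ℕ} {X Y : Finset ℕ}

theorem markWord_of_mem (hi : i ∈ X) : markWord a b X (2 * i + 2) = a :=
  if_pos ⟨i, hi, rfl⟩

theorem markWord_of_notMem (hi : i ∉ X) : markWord a b X (2 * i + 2) = b := by
  simpa [markWord] using fun h => absurd h hi

theorem markWord_of_lt {k s : ℕ} (hX : X ⊆ Finset.range k) (hs : 2 * k < s) :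
    markWord a b X s = b := by
  refine if_neg ?_
  rintro ⟨i, hi, rfl⟩
  have := Finset.mem_range.1 (hX hi)
  omega

theorem pow_four_mul_lt_two_pow {n : ℕ} (hn : 0 < n) : n ^ (4 * n) < 2 ^ (4 * n ^ 2) :=
  calc n ^ (4 * n) < (2 ^ n) ^ (4 * n) := Nat.pow_lt_pow_left Nat.lt_two_pow_self (by omega)
    _ = 2 ^ (4 * n ^ 2) := by rw [← pow_mul]; ring_nf

/-- The message exchange on the word that marks `X` in its first half and `Y` in its second. -/
noncomputable def markCBM (a b : Alph) (n : ℕ) (X Y : Finset ℕ) : PreCBM archQQ Alph :=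
  exchange archQQ n (2 * period n) (juxtapose (period n) (markWord a b X) (markWord a b Y))

theorem isCBM_markCBM (hn : 0 < n) : (markCBM a b n X Y).IsCBM :=
  isCBM_exchange hn archQQ.writer_injective archQQ.reader_injective archQQ.kind_ne_stack

theorem isSplice_markCBM (hn : 0 < n) (hX : X ⊆ Finset.range (4 * n ^ 2))
    (hY : Y ⊆ Finset.range (4 * n ^ 2)) :
    (markCBM a b n X Y).IsSplice (markCBM a b n X X) (markCBM a b n Y Y)
      (fun _ => period n + 1 - 2 * n) (fun _ => period n) := by
  have hperiod := period_eq_two_mul_add n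
  refine isSplice_exchange_juxtapose hn (by omega) fun s hs => ?_
  have hs : 2 * (4 * n ^ 2) < s := by
    have := (Finset.mem_Icc.1 hs).1
    omega
  rw [markWord_of_lt hX hs, markWord_of_lt hY hs]

theorem subset_of_not_joins_markCBM (hX : X ⊆ Finset.range (4 * n ^ 2))
    (h : ¬ (markCBM a b n X Y).Joins (.star roundTrip) (.star roundTripShift) a b) : X ⊆ Y := by
  intro i hiX
  by_contra hiY
  have hi : 2 * i + 2 ≤ period n := by
    have := Finset.mem_range.1 (hX hiX)
    rw [period_eq_two_mul_add]
    omega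
  exact h (joins_exchange_juxtapose hi (markWord_of_mem hiX) (markWord_of_notMem hiY))

attribute [local instance] CPDS.locsFintype CPDS.locsNonempty

theorem CPDS.exists_ne_acceptsPre_markCBM (S : CPDS archQQ Alph) (hn : n = Fintype.card S.Locs)
    (hacc : ∀ X, S.AcceptsPre (markCBM a b n X X)) :
    ∃ X ⊆ Finset.range (4 * n ^ 2), ∃ Y ⊆ Finset.range (4 * n ^ 2), X ≠ Y ∧
      S.AcceptsPre (markCBM a b n X Y) ∧ S.AcceptsPre (markCBM a b n Y X) := by
  have hpos : 0 < n := hn ▸ Fintype.card_pos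
  have hwindow : ∑ _ : archQQ.Procs, (period n + 1 - (period n + 1 - 2 * n)) = 4 * n := by
    have hprocs : Fintype.card archQQ.Procs = 2 := rfl
    have hperiod := period_eq_two_mul_add n
    rw [Finset.sum_const, Finset.card_univ, hprocs, smul_eq_mul]
    omega
  obtain ⟨X, Y, hne, hXY, hYX⟩ := S.exists_ne_acceptsPre_of_isSplice
    (ι := (Finset.range (4 * n ^ 2)).powerset) (N := fun X Y => markCBM a b n X Y)
    (fun X Y => isSplice_markCBM hpos (Finset.mem_powerset.1 X.2) (Finset.mem_powerset.1 Y.2))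
    (fun X => hacc X) (by
      rw [hwindow, ← hn, Fintype.card_coe, Finset.card_powerset, Finset.card_range]
      exact pow_four_mul_lt_two_pow hpos)
  exact ⟨X, Finset.mem_powerset.1 X.2, Y, Finset.mem_powerset.1 Y.2, Subtype.coe_ne_coe.2 hne,
    hXY, hYX⟩

theorem lang_ne_pdlLang_of_iff_not_joins (hab : a ≠ b) {Φ : PdlSentence archQQ Alph}
    (hΦ : ∀ M, pdlSentSem M Φ ↔ ¬ M.Joins (.star roundTrip) (.star roundTripShift) a b)
    (S : CPDS archQQ Alph) : S.lang ≠ pdlLang archQQ Alph Φ := by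
  intro heq
  obtain ⟨n, hn⟩ : ∃ n, n = Fintype.card S.Locs := ⟨_, rfl⟩
  have accepts_iff (X Y : Finset ℕ) : S.AcceptsPre (markCBM a b n X Y) ↔
      ¬ (markCBM a b n X Y).Joins (.star roundTrip) (.star roundTripShift) a b :=
    (Set.ext_iff.1 heq ⟨_, isCBM_markCBM (hn ▸ Fintype.card_pos)⟩).trans (hΦ _)
  obtain ⟨X, hX, Y, hY, hne, hXY, hYX⟩ := S.exists_ne_acceptsPre_markCBM hn fun X =>
    (accepts_iff X X).2 (not_joins_exchange_square hab (markWord a b X))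
  exact hne ((subset_of_not_joins_markCBM hX ((accepts_iff X Y).1 hXY)).antisymm
    (subset_of_not_joins_markCBM hY ((accepts_iff Y X).1 hYX)))

end Counting

theorem ipdl_lcpdl_not_cpds_definable_general {Alph : Type} [Nontrivial Alph] :
    (∃ Φ : PdlSentence archQQ Alph, Φ.NoConvLoop ∧
      ∀ S : CPDS archQQ Alph, S.lang ≠ pdlLang archQQ Alph Φ) ∧
    (∃ Φ' : PdlSentence archQQ Alph, Φ'.NoInter ∧
      ∀ S : CPDS archQQ Alph, S.lang ≠ pdlLang archQQ Alph Φ') := by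
  obtain ⟨a, b, hab⟩ := exists_pair_ne Alph
  exact
    ⟨⟨.notJoinsInter (.star roundTrip) (.star roundTripShift) a b,
      PdlSentence.noConvLoop_notJoinsInter noConvLoop_roundTrip noConvLoop_roundTripShift a b,
      lang_ne_pdlLang_of_iff_not_joins hab fun M =>
        PdlSentence.pdlSentSem_notJoinsInter _ _ M a b⟩,
    ⟨.notJoinsLoop (.star roundTrip) (.star roundTripShift) a b,
      PdlSentence.noInter_notJoinsLoop noInter_roundTrip noInter_roundTripShift a b,
      lang_ne_pdlLang_of_iff_not_joins hab fun M =>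
        PdlSentence.pdlSentSem_notJoinsLoop _ _ M a b⟩⟩

/-- Over the architecture with two processes connected by two
queues (one in each direction) and a three-letter alphabet: (i) there is an
IPDL sentence (intersection allowed, but no converse and no loop) whose CBM
language is the language of no CPDS; and (ii) there is an LCPDL sentence
(converse and loop allowed, but no intersection) whose CBM language is the
language of no CPDS. -/
theorem ipdl_lcpdl_not_cpds_definable :
    (∃ Φ : PdlSentence archQQ (Fin 3), Φ.NoConvLoop ∧
      ∀ S : CPDS archQQ (Fin 3), S.lang ≠ pdlLang archQQ (Fin 3) Φ) ∧
    (∃ Φ' : PdlSentence archQQ (Fin 3), Φ'.NoInter ∧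
      ∀ S : CPDS archQQ (Fin 3), S.lang ≠ pdlLang archQQ (Fin 3) Φ') :=
  ipdl_lcpdl_not_cpds_definable_general
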